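/- Let S₁, S₂ be 2-dimensional complex vector spaces. The variety {(p₁, p₂, a) ∈ End(S₁) × End(S₂) × Hom(S₂,S₁) : a p₂ = p₁ a} is a union of irreducible closed subvarieties indexed by rank conditions on a, and in particular it is reducible; the closure of the locus where a is invertible is strictly contained in it and is cut out inside it by the additional equations det(p₁) = det(p₂) and Tr(p₁) = Tr(p₂). -/

import Mathlib

noncomputable section

/-- Points `(p₁, p₂, a) ∈ End(S₁) × End(S₂) × Hom(S₂,S₁)`, all 2×2 matrices. -/
abbrev Pt7 := Matrix (Fin 2) (Fin 2) ℂ × Matrix (Fin 2) (Fin 2) ℂ ×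
  Matrix (Fin 2) (Fin 2) ℂ

abbrev Idx7 := (Fin 2 × Fin 2) ⊕ (Fin 2 × Fin 2) ⊕ (Fin 2 × Fin 2)

/-- Coordinates of a point, for evaluating polynomials on `ℂ¹²`. -/
def coords7 (t : Pt7) : Idx7 → ℂ :=
  Sum.elim (fun ij => t.1 ij.1 ij.2)
    (Sum.elim (fun ij => t.2.1 ij.1 ij.2) (fun ij => t.2.2 ij.1 ij.2))

/-- `f` vanishes identically on the set `S`. -/
def VanishOn (f : MvPolynomial Idx7 ℂ) (S : Set Pt7) : Prop :=
  ∀ t ∈ S, MvPolynomial.eval (coords7 t) f = 0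

/-- Zariski closure of a subset of `ℂ¹²`. -/
def zcl (S : Set Pt7) : Set Pt7 :=
  {t | ∀ f : MvPolynomial Idx7 ℂ, VanishOn f S → MvPolynomial.eval (coords7 t) f = 0}

/-- The intertwiner variety `{(p₁,p₂,a) : a p₂ = p₁ a}`. -/
def X7 : Set Pt7 := {t | t.2.2 * t.2.1 = t.1 * t.2.2}

/-!
The locus where `a` has rank `r` is irreducible because it is parametrized polynomially by a
principal open subset of an affine space: fix an idempotent `E` of rank `r` and write `a = g E h`
with `g`, `h` invertible; after conjugating `p₁` by `g` and `p₂` by `h`, the equation `a p₂ = p₁ a`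
becomes linear with `E` in place of `a`. Its vanishing ideal is then the kernel of a ring
homomorphism into a domain.

On the invertible locus `p₁` and `p₂` are conjugate, so `det p₁ = det p₂` and `Tr p₁ = Tr p₂` hold
on its closure. Conversely, let `(p₁, p₂, a)` satisfy these equations with `a` singular. If some
invertible `b` intertwines `p₁` and `p₂`, then the line `a + s b` consists of intertwiners and is
generically invertible. Such a `b` exists when neither `p₁` nor `p₂` is scalar, both being then
conjugate to the same companion matrix. A scalar `p₁` or `p₂` is made nonscalar by adding a multiple
of a nilpotent matrix that `a` annihilates.
-/

open MvPolynomial Matrix Filter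

section VanishingIdeal

variable {K σ τ : Type*} [Field K] [Infinite K]

theorem isPrime_vanishingIdeal_of_parametrization (F : σ → MvPolynomial τ K)
    {d : MvPolynomial τ K} (hd : d ≠ 0) {S : Set (σ → K)}
    (hS : ∀ x, eval x d ≠ 0 → (fun i => eval x (F i)) ∈ S)
    (hF : S ⊆ Set.range fun x i => eval x (F i)) : (vanishingIdeal K S).IsPrime := by
  have eval_bind₁ (x : τ → K) (f : MvPolynomial σ K) :
      eval x (bind₁ F f) = eval (fun i => eval x (F i)) f := by
    simp only [← coe_aeval_eq_eval, RingHom.coe_coe, aeval_bind₁]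
  suffices vanishingIdeal K S = RingHom.ker (bind₁ F) from this ▸ RingHom.ker_isPrime _
  ext f
  rw [mem_vanishingIdeal_iff, RingHom.mem_ker]
  refine ⟨fun hf => ?_, fun hf y hy => ?_⟩
  · refine (mul_eq_zero.1 (MvPolynomial.funext fun x => ?_)).resolve_left hd
    by_cases hx : eval x d = 0
    · simp only [map_mul, hx, zero_mul, map_zero]
    · have hfx : eval (fun i => eval x (F i)) f = 0 := hf _ (hS x hx)
      simp only [map_mul, eval_bind₁, hfx, mul_zero, map_zero]
  · obtain ⟨x, rfl⟩ := hF hy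
    exact (eval_bind₁ x f).symm.trans (by rw [hf, map_zero])

theorem eval_eq_zero_of_eventually_line {x y : σ → K} {f : MvPolynomial σ K}
    (h : ∀ᶠ s : K in cofinite, eval (x + s • y) f = 0) : eval x f = 0 := by
  let P : Polynomial K := aeval (fun i => Polynomial.C (x i) + Polynomial.X * Polynomial.C (y i)) f
  have eval_P (s : K) : P.eval s = eval (x + s • y) f := by
    have aeval_comp : (Polynomial.aeval s).comp
        (aeval fun i => Polynomial.C (x i) + Polynomial.X * Polynomial.C (y i)) =
          aeval (x + s • y) :=
      algHom_ext fun i => by simp [mul_comm s]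
    rw [← Polynomial.coe_aeval_eq_eval, ← coe_aeval_eq_eval]
    exact DFunLike.congr_fun aeval_comp f
  have hP : P = 0 := by
    refine P.eq_zero_of_infinite_isRoot (frequently_cofinite_iff_infinite.1 ?_)
    exact (h.mono fun s hs => (eval_P s).trans hs).frequently
  simpa [hP] using (eval_P 0).symm

end VanishingIdeal

section MatrixLemmas

variable {n K : Type*} [Fintype n] [Field K]

theorem exists_isIdempotentElem_rank_eq {r : ℕ} (hr : r ≤ Fintype.card n) :
    ∃ E : Matrix n n K, IsIdempotentElem E ∧ E.rank = r := by
  classical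
  obtain ⟨s, -, hs⟩ := Finset.exists_subset_card_eq hr
  refine ⟨diagonal fun i => if i ∈ s then 1 else 0, ?_, ?_⟩
  · simp [IsIdempotentElem, diagonal_mul_diagonal]
  · simp [rank_diagonal, hs]

variable [DecidableEq n]

theorem exists_isUnit_mul_mul_of_rank_eq {a b : Matrix n n K} (hab : a.rank = b.rank) :
    ∃ g h : Matrix n n K, IsUnit g ∧ IsUnit h ∧ g * b * h = a := by
  have normal_form {r : ℕ} {c : Matrix n n K} (hc : c.rank = r) :
      ∃ (v w : (Matrix n n K)ˣ) (e : n ≃ Fin r ⊕ Fin (Fintype.card n - r)),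
        v.val * c * w.val = (fromBlocks 1 0 0 0).submatrix e e := by
    subst hc
    obtain ⟨_, _, e, ⟨v, rfl⟩, ⟨w, rfl⟩, hvw⟩ := exists_rank_normal_form c
    exact ⟨v, w, e, hvw⟩
  obtain ⟨v, w, e, ha⟩ := normal_form hab
  obtain ⟨v', w', e', hb⟩ := normal_form (c := b) rfl
  let σ : n ≃ n := e.trans e'.symm
  obtain ⟨S, hS⟩ : IsUnit ((1 : Matrix n n K).submatrix σ (Equiv.refl n)) :=
    (isUnit_submatrix_equiv _ _).2 isUnit_one
  obtain ⟨T, hT⟩ : IsUnit ((1 : Matrix n n K).submatrix (Equiv.refl n) σ) :=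
    (isUnit_submatrix_equiv _ _).2 isUnit_one
  have permute : v.val * a * w.val = S.val * (v'.val * b * w'.val) * T.val := by
    rw [ha, hb, hS, hT, one_submatrix_mul, mul_submatrix_one]
    ext i j
    simp [σ]
  refine ⟨_, _, (v⁻¹ * S * v').isUnit, (w' * T * w⁻¹).isUnit, ?_⟩
  calc (v⁻¹ * S * v').val * b * (w' * T * w⁻¹).val
      = v⁻¹.val * (S.val * (v'.val * b * w'.val) * T.val) * w⁻¹.val := by
        simp only [Units.val_mul, mul_assoc]
    _ = a := by rw [← permute, mul_assoc v.val, Units.inv_mul_cancel_left,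
        Units.mul_inv_cancel_right]

theorem eventually_isUnit_add_smul (a : Matrix n n K) {b : Matrix n n K} (hb : IsUnit b) :
    ∀ᶠ s : K in cofinite, IsUnit (a + s • b) := by
  obtain ⟨u, rfl⟩ := hb
  let χ := (-(u⁻¹.val * a)).charpoly
  have factor (s : K) : a + s • u.val = u.val * (scalar n s - -(u⁻¹.val * a)) := by
    rw [sub_neg_eq_add, mul_add, Units.mul_inv_cancel_left, add_comm, scalar_apply,
      ← smul_one_eq_diagonal, mul_smul_comm, mul_one]
  have finite_roots : {s | χ.IsRoot s}.Finite :=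
    Polynomial.finite_setOfPred_isRoot (charpoly_monic _).ne_zero
  filter_upwards [finite_roots.eventually_cofinite_notMem] with s hs
  rw [factor]
  refine u.isUnit.mul ((isUnit_iff_isUnit_det _).2 ?_)
  rw [← eval_charpoly]
  exact Ne.isUnit hs

end MatrixLemmas

section FinTwo

variable {K : Type*} [Field K]

theorem exists_isUnit_mul_eq_mul_companion {p : Matrix (Fin 2) (Fin 2) K}
    (hp : p ∉ Set.range (scalar (Fin 2))) :
    ∃ u : Matrix (Fin 2) (Fin 2) K, IsUnit u ∧ p * u = u * !![0, -p.det; 1, p.trace] := by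
  -- `![x, y]` is not an eigenvector of `p`; the columns of `u` are this vector and its image.
  obtain ⟨x, y, hxy⟩ : ∃ x y : K,
      x * (p 1 0 * x + p 1 1 * y) - (p 0 0 * x + p 0 1 * y) * y ≠ 0 := by
    by_contra! h
    have h₁₀ : p 1 0 = 0 := by simpa using h 1 0
    have h₀₁ : p 0 1 = 0 := by simpa using h 0 1
    have h₁₁ : p 1 1 = p 0 0 := by simpa [h₁₀, h₀₁, sub_eq_zero] using h 1 1
    refine hp ⟨p 0 0, ?_⟩
    ext i j
    fin_cases i <;> fin_cases j <;> simp [h₁₀, h₀₁, h₁₁]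
  refine ⟨!![x, p 0 0 * x + p 0 1 * y; y, p 1 0 * x + p 1 1 * y], ?_, ?_⟩
  · rw [isUnit_iff_isUnit_det, det_fin_two_of]
    exact hxy.isUnit
  · ext i j
    fin_cases i <;> fin_cases j <;>
      simp [mul_apply, Fin.sum_univ_two, det_fin_two, trace_fin_two] <;> ring

theorem exists_isUnit_mul_eq_mul_of_det_eq_of_trace_eq {p q : Matrix (Fin 2) (Fin 2) K}
    (hp : p ∉ Set.range (scalar (Fin 2))) (hq : q ∉ Set.range (scalar (Fin 2)))
    (hdet : p.det = q.det) (htrace : p.trace = q.trace) :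
    ∃ b : Matrix (Fin 2) (Fin 2) K, IsUnit b ∧ b * q = p * b := by
  obtain ⟨_, ⟨u, rfl⟩, hu⟩ := exists_isUnit_mul_eq_mul_companion hp
  obtain ⟨_, ⟨v, rfl⟩, hv⟩ := exists_isUnit_mul_eq_mul_companion hq
  rw [hdet, htrace] at hu
  set C := !![0, -q.det; 1, q.trace]
  have hv' : v⁻¹.val * q = C * v⁻¹.val := by
    rw [Units.inv_mul_eq_iff_eq_mul, ← mul_assoc, ← hv, Units.mul_inv_cancel_right]
  refine ⟨(u * v⁻¹).val, Units.isUnit _, ?_⟩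
  rw [Units.val_mul, mul_assoc, hv', ← mul_assoc, ← hu, mul_assoc]

theorem exists_mul_eq_zero_notMem_range_scalar_left (p : Matrix (Fin 2) (Fin 2) K)
    {a : Matrix (Fin 2) (Fin 2) K} (ha : a.det = 0) :
    ∃ m : Matrix (Fin 2) (Fin 2) K, m * a = 0 ∧ ∀ s : K, s ≠ 0 →
      (p + s • m).det = p.det ∧ (p + s • m).trace = p.trace ∧
        p + s • m ∉ Set.range (scalar (Fin 2)) := by
  by_cases hp : p ∈ Set.range (scalar (Fin 2))
  · obtain ⟨c, rfl⟩ := hp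
    obtain ⟨w, hw, hwa⟩ := exists_vecMul_eq_zero_iff.2 ha
    -- The rows of `m` are multiples of `w`, so `m * a = 0`, and `m` is nilpotent.
    have hm (i j : Fin 2) : vecMulVec ![w 1, -w 0] w i j = ![w 1, -w 0] i * w j := rfl
    generalize hmw : vecMulVec ![w 1, -w 0] w = m at hm
    refine ⟨m, by rw [← hmw, vecMulVec_mul, hwa, vecMulVec_zero], fun s hs => ⟨?_, ?_, ?_⟩⟩
    · simp only [det_fin_two, scalar_apply, Matrix.add_apply, Matrix.smul_apply, smul_eq_mul, hm,
        diagonal_apply_eq, diagonal_apply_ne _ zero_ne_one, diagonal_apply_ne _ one_ne_zero,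
        cons_val_zero, cons_val_one]
      ring
    · simp [trace_fin_two, hm, mul_comm]
    · rintro ⟨d, hd⟩
      have h₁ : w 1 = 0 := by simpa [hm, hs] using congr_fun₂ hd 0 1
      have h₀ : w 0 = 0 := by simpa [hm, hs] using congr_fun₂ hd 1 0
      exact hw (by ext i; fin_cases i <;> simp [h₀, h₁])
  · refine ⟨0, zero_mul a, fun s _ => ?_⟩
    simpa using hp

theorem exists_mul_eq_zero_notMem_range_scalar_right (p : Matrix (Fin 2) (Fin 2) K)
    {a : Matrix (Fin 2) (Fin 2) K} (ha : a.det = 0) :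
    ∃ m : Matrix (Fin 2) (Fin 2) K, a * m = 0 ∧ ∀ s : K, s ≠ 0 →
      (p + s • m).det = p.det ∧ (p + s • m).trace = p.trace ∧
        p + s • m ∉ Set.range (scalar (Fin 2)) := by
  obtain ⟨m, hma, hm⟩ := exists_mul_eq_zero_notMem_range_scalar_left pᵀ (a := aᵀ) (by simpa)
  refine ⟨mᵀ, by simpa using congr_arg transpose hma, fun s hs => ?_⟩
  obtain ⟨hdet, htrace, hscalar⟩ := hm s hs
  have hsum : (pᵀ + s • m)ᵀ = p + s • mᵀ := by simp
  rw [← hsum, det_transpose, trace_transpose, hdet, htrace, det_transpose, trace_transpose]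
  refine ⟨rfl, rfl, ?_⟩
  rintro ⟨c, hc⟩
  exact hscalar ⟨c, by simpa using congr_arg transpose hc⟩

end FinTwo

/-- Triples `(p₁, p₂, a)` of square matrices: two endomorphisms and a candidate intertwiner
`a` from the second to the first. -/
abbrev MatrixTriple (n R : Type*) := Matrix n n R × Matrix n n R × Matrix n n R

namespace MatrixTriple

variable {n R A K : Type*}

/-- The indices of the affine coordinates on the space of triples. -/
abbrev EntryIndex (n : Type*) := (n × n) ⊕ (n × n) ⊕ (n × n)

/-- The affine coordinates of a triple, at which polynomials on the space of triples are
evaluated. -/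
def entries (t : MatrixTriple n R) : EntryIndex n → R :=
  Sum.elim (fun ij => t.1 ij.1 ij.2)
    (Sum.elim (fun ij => t.2.1 ij.1 ij.2) (fun ij => t.2.2 ij.1 ij.2))

section ZariskiClosure

variable [Field K]

/-- The polynomial `f` vanishes at every point of `S`. -/
def VanishesOn (f : MvPolynomial (EntryIndex n) K) (S : Set (MatrixTriple n K)) : Prop :=
  ∀ t ∈ S, eval (entries t) f = 0

/-- The Zariski closure of a set of `K`-points. -/
def zariskiClosure (S : Set (MatrixTriple n K)) : Set (MatrixTriple n K) :=
  {t | ∀ f : MvPolynomial (EntryIndex n) K, VanishesOn f S → eval (entries t) f = 0}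

/-- Irreducibility of a set of `K`-points in the Zariski topology, phrased as primality of its
vanishing ideal; the empty set counts as irreducible. -/
def IsZariskiIrreducible (S : Set (MatrixTriple n K)) : Prop :=
  ∀ f g : MvPolynomial (EntryIndex n) K, VanishesOn (f * g) S → VanishesOn f S ∨ VanishesOn g S

variable {S T : Set (MatrixTriple n K)}

theorem subset_zariskiClosure : S ⊆ zariskiClosure S := fun t ht _ hf => hf t ht

theorem vanishesOn_zariskiClosure {f : MvPolynomial (EntryIndex n) K} :
    VanishesOn f (zariskiClosure S) ↔ VanishesOn f S :=
  ⟨fun hf t ht => hf t (subset_zariskiClosure ht), fun hf _ ht => ht f hf⟩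

theorem zariskiClosure_subset_zariskiClosure (h : S ⊆ zariskiClosure T) :
    zariskiClosure S ⊆ zariskiClosure T :=
  fun _ ht f hf => ht f fun _ ht' => h ht' f hf

theorem IsZariskiIrreducible.zariskiClosure (h : IsZariskiIrreducible S) :
    IsZariskiIrreducible (zariskiClosure S) := by
  simpa only [IsZariskiIrreducible, vanishesOn_zariskiClosure] using h

theorem isZariskiIrreducible_of_isPrime (h : (vanishingIdeal K (entries '' S)).IsPrime) :
    IsZariskiIrreducible S := by
  have mem_iff (f : MvPolynomial (EntryIndex n) K) :
      f ∈ vanishingIdeal K (entries '' S) ↔ VanishesOn f S := Set.forall_mem_image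
  intro f g hfg
  simpa only [mem_iff] using h.mem_or_mem ((mem_iff _).2 hfg)

theorem mem_zariskiClosure_of_eventually_line [Infinite K] {x y : MatrixTriple n K}
    (h : ∀ᶠ s : K in cofinite, x + s • y ∈ S) : x ∈ zariskiClosure S := by
  intro f hf
  have entries_line (s : K) : entries (x + s • y) = entries x + s • entries y := by
    ext (i | i | i) <;> rfl
  exact eval_eq_zero_of_eventually_line (h.mono fun s hs => entries_line s ▸ hf _ hs)

end ZariskiClosure

section Map

variable [CommRing R] [CommRing A]

/-- Applying a ring homomorphism to all entries of a triple. -/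
def map (f : R →+* A) (t : MatrixTriple n R) : MatrixTriple n A :=
  (t.1.map f, t.2.1.map f, t.2.2.map f)

theorem entries_map (f : R →+* A) (t : MatrixTriple n R) (i : EntryIndex n) :
    entries (map f t) i = f (entries t i) := by
  rcases i with i | i | i <;> rfl

variable (n R) in
/-- The triple whose entries are the coordinate functions on the space of triples. -/
def generic : MatrixTriple n (MvPolynomial (EntryIndex n) R) :=
  (of fun i j => X (.inl (i, j)), of fun i j => X (.inr (.inl (i, j))),
    of fun i j => X (.inr (.inr (i, j))))

theorem map_eval_generic (t : MatrixTriple n R) : map (eval (entries t)) (generic n R) = t := by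
  ext <;> simp [map, generic, entries]

variable (n R) in
/-- The `k`-th of a family of independent generic matrices. -/
def genericMatrix {ι : Type*} (k : ι) : Matrix n n (MvPolynomial (ι × n × n) R) :=
  of fun i j => X (k, i, j)

theorem map_eval_genericMatrix {ι : Type*} (x : ι × n × n → R) (k : ι) :
    (genericMatrix n R k).map (eval x) = of fun i j => x (k, i, j) := by
  ext i j
  simp [genericMatrix]

end Map

section Intertwiners

variable (n R)
variable [Fintype n] [CommRing R]

/-- The intertwiner variety: triples `(p₁, p₂, a)` with `a p₂ = p₁ a`. -/
def intertwiners : Set (MatrixTriple n R) := {t | t.2.2 * t.2.1 = t.1 * t.2.2}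

/-- The locally closed subset of the intertwiner variety on which `a` has rank `r`. -/
def rankStratum (r : ℕ) : Set (MatrixTriple n R) :=
  {t ∈ intertwiners n R | t.2.2.rank = r}

/-- The open subset of the intertwiner variety on which `a` is invertible. -/
def invertibleLocus [DecidableEq n] : Set (MatrixTriple n R) :=
  {t ∈ intertwiners n R | IsUnit t.2.2}

end Intertwiners

section Closure

variable [Fintype n] [Field K] {S : Set (MatrixTriple n K)}

theorem zariskiClosure_subset_intertwiners (h : S ⊆ intertwiners n K) :
    zariskiClosure S ⊆ intertwiners n K := by
  intro t ht
  ext i j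
  let T := generic n K
  have eval_sub (t : MatrixTriple n K) :
      eval (entries t) ((T.2.2 * T.2.1 - T.1 * T.2.2) i j) =
        (t.2.2 * t.2.1) i j - (t.1 * t.2.2) i j := by
    simp [T, generic, entries, mul_apply]
  refine sub_eq_zero.1 ((eval_sub t).symm.trans (ht _ fun t' ht' => ?_))
  rw [eval_sub, h ht', sub_self]

theorem intertwiners_eq_iUnion_zariskiClosure :
    intertwiners n K = ⋃ r ≤ Fintype.card n, zariskiClosure (rankStratum n K r) := by
  refine Set.Subset.antisymm (fun t ht => ?_) (Set.iUnion₂_subset fun r _ => ?_)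
  · exact Set.mem_iUnion₂_of_mem t.2.2.rank_le_card_width (subset_zariskiClosure ⟨ht, rfl⟩)
  · exact zariskiClosure_subset_intertwiners fun _ ht => ht.1

theorem eval_det_sub_det [DecidableEq n] (t : MatrixTriple n K) :
    eval (entries t) ((generic n K).1.det - (generic n K).2.1.det) = t.1.det - t.2.1.det := by
  conv_rhs => rw [← map_eval_generic t]
  simp only [map_sub, RingHom.map_det, map, RingHom.mapMatrix_apply]

theorem not_isZariskiIrreducible_intertwiners [Nonempty n] :
    ¬ IsZariskiIrreducible (intertwiners n K) := by
  classical
  intro h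
  have eval_det (t : MatrixTriple n K) : eval (entries t) (generic n K).2.2.det = t.2.2.det := by
    conv_rhs => rw [← map_eval_generic t]
    simp only [RingHom.map_det, map, RingHom.mapMatrix_apply]
  let T := generic n K
  have vanishes : VanishesOn (T.2.2.det * (T.1.det - T.2.1.det)) (intertwiners n K) := by
    intro t ht
    rw [map_mul, eval_det, eval_det_sub_det, mul_sub, sub_eq_zero, mul_comm _ t.1.det, ← det_mul,
      ← det_mul, ht]
  rcases h _ _ vanishes with h | h
  · have := h (0, 0, 1) (by simp [intertwiners])
    simp [T, eval_det] at this
  · have := h (1, 0, 0) (by simp [intertwiners])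
    simp [T, eval_det_sub_det, -map_sub] at this

variable [DecidableEq n]

theorem det_eq_and_trace_eq_of_mem_invertibleLocus {t : MatrixTriple n K}
    (ht : t ∈ invertibleLocus n K) : t.1.det = t.2.1.det ∧ t.1.trace = t.2.1.trace := by
  obtain ⟨hat, ha⟩ := ht
  have conj : t.1 = t.2.2 * t.2.1 * t.2.2⁻¹ := by
    rw [hat, mul_nonsing_inv_cancel_right _ _ ((isUnit_iff_isUnit_det _).1 ha)]
  rw [conj, det_conj ha, trace_conj ha]
  exact ⟨rfl, rfl⟩

theorem zariskiClosure_invertibleLocus_subset :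
    zariskiClosure (invertibleLocus n K) ⊆
      {t ∈ intertwiners n K | t.1.det = t.2.1.det ∧ t.1.trace = t.2.1.trace} := by
  intro t ht
  have eval_trace_sub_trace (t : MatrixTriple n K) :
      eval (entries t) ((generic n K).1.trace - (generic n K).2.1.trace) =
        t.1.trace - t.2.1.trace := by
    simp [trace, generic, entries]
  refine ⟨zariskiClosure_subset_intertwiners (fun _ ht' => ht'.1) ht, ?_, ?_⟩
  · refine sub_eq_zero.1 ((eval_det_sub_det t).symm.trans (ht _ fun t' ht' => ?_))
    rw [eval_det_sub_det, (det_eq_and_trace_eq_of_mem_invertibleLocus ht').1, sub_self]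
  · refine sub_eq_zero.1 ((eval_trace_sub_trace t).symm.trans (ht _ fun t' ht' => ?_))
    rw [eval_trace_sub_trace, (det_eq_and_trace_eq_of_mem_invertibleLocus ht').2, sub_self]

theorem zariskiClosure_invertibleLocus_ssubset [Nonempty n] :
    zariskiClosure (invertibleLocus n K) ⊂ intertwiners n K := by
  refine ⟨zariskiClosure_subset_intertwiners fun _ ht => ht.1, fun h => ?_⟩
  have mem : ((1, 0, 0) : MatrixTriple n K) ∈ intertwiners n K := by simp [intertwiners]
  have hdet := (zariskiClosure_invertibleLocus_subset (h mem)).2.1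
  simp at hdet

end Closure

section NormalForm

variable [Fintype n] [DecidableEq n]

/-- The parametrization of the intertwiners `(p₁, p₂, g * E * h)` with `E` idempotent and `g`, `h`
invertible. Any `P` and `Q` are first corrected so that `E` intertwines them: `E * P * E` is the
corner they must share, and only `P * (1 - E)` and `(1 - E) * Q` remain free. Conjugation by `g` and
`h` uses adjugates, so that all entries are polynomial; the factors `h.det` and `g.det` give both
sides of the intertwining relation the same scalar. -/
def normalForm [CommRing R] (E g h P Q : Matrix n n R) : MatrixTriple n R :=
  (h.det • (g * (E * P * E + P * (1 - E)) * g.adjugate),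
    g.det • (h.adjugate * (E * P * E + (1 - E) * Q) * h), g * E * h)

theorem map_normalForm [CommRing R] [CommRing A] (f : R →+* A) (E g h P Q : Matrix n n R) :
    map f (normalForm E g h P Q) =
      normalForm (E.map f) (g.map f) (h.map f) (P.map f) (Q.map f) := by
  simp only [map, normalForm, Matrix.map_smul' f _ _ (map_mul f)]
  simp only [← RingHom.mapMatrix_apply, map_mul, map_add, map_sub, map_one, RingHom.map_adjugate,
    RingHom.map_det]

theorem normalForm_mem_intertwiners [CommRing R] {E : Matrix n n R} (hE : IsIdempotentElem E)
    (g h P Q : Matrix n n R) : normalForm E g h P Q ∈ intertwiners n R := by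
  have left : E * (E * P * E + (1 - E) * Q) = E * P * E := by
    rw [mul_add, ← mul_assoc, ← mul_assoc, ← mul_assoc, hE.eq, hE.mul_one_sub_self, zero_mul,
      add_zero]
  have right : (E * P * E + P * (1 - E)) * E = E * P * E := by
    rw [add_mul, mul_assoc, hE.eq, mul_assoc P, hE.one_sub_mul_self, mul_zero, add_zero]
  calc g * E * h * (g.det • (h.adjugate * (E * P * E + (1 - E) * Q) * h))
      = g.det • (g * E * (h * h.adjugate) * (E * P * E + (1 - E) * Q) * h) := by
        simp only [mul_smul_comm, mul_assoc]
    _ = h.det • g.det • (g * (E * (E * P * E + (1 - E) * Q)) * h) := by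
        simp only [mul_adjugate, mul_smul_comm, smul_mul_assoc, mul_one, mul_assoc,
          smul_comm h.det]
    _ = h.det • g.det • (g * ((E * P * E + P * (1 - E)) * E) * h) := by rw [left, right]
    _ = h.det • (g * (E * P * E + P * (1 - E)) * (g.adjugate * g) * E * h) := by
        simp only [adjugate_mul, mul_smul_comm, smul_mul_assoc, mul_one, mul_assoc]
    _ = h.det • (g * (E * P * E + P * (1 - E)) * g.adjugate) * (g * E * h) := by
        simp only [smul_mul_assoc, mul_assoc]

variable [Field K]

theorem exists_normalForm_eq {E g h p q : Matrix n n K} (hE : IsIdempotentElem E) (hg : IsUnit g)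
    (hh : IsUnit h) (hpq : g * E * h * q = p * (g * E * h)) :
    ∃ P Q, normalForm E g h P Q = (p, q, g * E * h) := by
  have hg' := (isUnit_iff_isUnit_det _).1 hg
  have hh' := (isUnit_iff_isUnit_det _).1 hh
  let c := (g.det * h.det)⁻¹
  let P := c • (g⁻¹ * p * g)
  let Q := c • (h * q * h⁻¹)
  have hEQ : E * Q = P * E := by
    have conj := congr_arg (g⁻¹ * · * h⁻¹) hpq
    simp only [mul_assoc, nonsing_inv_mul_cancel_left _ _ hg', mul_nonsing_inv _ hh',
      mul_one] at conj
    simp only [P, Q, smul_mul_assoc, mul_smul_comm, mul_assoc, conj]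
  have hEPE : E * P * E = P * E := by rw [mul_assoc, ← hEQ, ← mul_assoc, hE.eq]
  have hP : E * P * E + P * (1 - E) = P := by rw [hEPE, ← mul_add, add_sub_cancel, mul_one]
  have hQ : E * P * E + (1 - E) * Q = Q := by
    rw [hEPE, ← hEQ, ← add_mul, add_sub_cancel, one_mul]
  refine ⟨P, Q, ?_⟩
  have hgP : g * P = c • (p * g) := by
    simp only [P, mul_smul_comm, mul_assoc, mul_nonsing_inv_cancel_left _ _ hg']
  have hQh : Q * h = c • (h * q) := by
    simp only [Q, smul_mul_assoc, nonsing_inv_mul_cancel_right _ _ hh']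
  have hc : g.det * h.det * c = 1 := mul_inv_cancel₀ (mul_ne_zero hg'.ne_zero hh'.ne_zero)
  have fst_eq : h.det • (g * P * g.adjugate) = p := by
    rw [hgP, smul_mul_assoc, mul_assoc, mul_adjugate, mul_smul_comm, mul_one, smul_smul, smul_smul,
      mul_assoc, mul_comm c, ← mul_assoc, mul_comm h.det, hc, one_smul]
  have snd_eq : g.det • (h.adjugate * Q * h) = q := by
    rw [mul_assoc, hQh, mul_smul_comm, ← mul_assoc, adjugate_mul, smul_mul_assoc, one_mul,
      smul_smul, smul_smul, mul_right_comm, hc, one_smul]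
  rw [normalForm, hP, hQ, fst_eq, snd_eq]

/-- The normal form whose parameters `g`, `h`, `P`, `Q` are generic matrices; its entries are the
polynomials of the parametrization. -/
def genericNormalForm (E : Matrix n n K) : MatrixTriple n (MvPolynomial (Fin 4 × n × n) K) :=
  normalForm (E.map C) (genericMatrix n K (0 : Fin 4)) (genericMatrix n K 1) (genericMatrix n K 2)
    (genericMatrix n K 3)

theorem eval_entries_genericNormalForm (E : Matrix n n K) (x : Fin 4 × n × n → K) :
    (fun i => eval x (entries (genericNormalForm E) i)) =
      entries (normalForm E (of fun i j => x (0, i, j)) (of fun i j => x (1, i, j))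
        (of fun i j => x (2, i, j)) (of fun i j => x (3, i, j))) := by
  have map_C : (E.map C).map (eval x) = E := by
    ext
    simp
  ext i
  simp only [← entries_map, genericNormalForm, map_normalForm, map_C, map_eval_genericMatrix]

end NormalForm

theorem isZariskiIrreducible_rankStratum [Fintype n] [Field K] [Infinite K] {r : ℕ}
    (hr : r ≤ Fintype.card n) : IsZariskiIrreducible (rankStratum n K r) := by
  classical
  obtain ⟨E, hE, rfl⟩ := exists_isIdempotentElem_rank_eq (K := K) hr
  let d := (genericMatrix n K (0 : Fin 4)).det * (genericMatrix n K 1).det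
  have eval_d (x : Fin 4 × n × n → K) :
      eval x d = (of fun i j => x (0, i, j)).det * (of fun i j => x (1, i, j)).det := by
    simp only [d, map_mul, RingHom.map_det, RingHom.mapMatrix_apply, map_eval_genericMatrix]
  have hd : d ≠ 0 := by
    intro hd
    have eval_one : eval _ d = (1 : Matrix n n K).det * (1 : Matrix n n K).det :=
      eval_d fun kij => (1 : Matrix n n K) kij.2.1 kij.2.2
    simp [hd] at eval_one
  refine isZariskiIrreducible_of_isPrime <|
    isPrime_vanishingIdeal_of_parametrization (entries (genericNormalForm E)) hd (fun x hx => ?_) ?_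
  · rw [eval_d, mul_ne_zero_iff, ← isUnit_iff_ne_zero, ← isUnit_iff_ne_zero] at hx
    rw [eval_entries_genericNormalForm]
    refine Set.mem_image_of_mem _ ⟨normalForm_mem_intertwiners hE _ _ _ _, ?_⟩
    exact (rank_mul_eq_left_of_isUnit_det _ _ hx.2).trans
      (rank_mul_eq_right_of_isUnit_det _ _ hx.1)
  · rintro _ ⟨⟨p, q, a⟩, ⟨hpq, ha⟩, rfl⟩
    obtain ⟨g, h, hg, hh, rfl⟩ := exists_isUnit_mul_mul_of_rank_eq ha
    obtain ⟨P, Q, hPQ⟩ := exists_normalForm_eq hE hg hh hpq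
    refine ⟨fun kij => ![g, h, P, Q] kij.1 kij.2.1 kij.2.2, ?_⟩
    rw [← hPQ]
    exact eval_entries_genericNormalForm E _

section InvertibleLocus

variable [Field K] [Infinite K]

theorem mem_zariskiClosure_invertibleLocus_of_isUnit_mul_eq_mul [Fintype n] [DecidableEq n]
    {p q a b : Matrix n n K} (haq : a * q = p * a) (hb : IsUnit b) (hbq : b * q = p * b) :
    (p, q, a) ∈ zariskiClosure (invertibleLocus n K) := by
  refine mem_zariskiClosure_of_eventually_line (y := (0, 0, b)) ?_
  filter_upwards [eventually_isUnit_add_smul a hb] with s hs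
  refine ⟨?_, hs⟩
  simp [intertwiners, add_mul, mul_add, haq, hbq]

theorem zariskiClosure_invertibleLocus_fin_two :
    zariskiClosure (invertibleLocus (Fin 2) K) =
      {t ∈ intertwiners (Fin 2) K | t.1.det = t.2.1.det ∧ t.1.trace = t.2.1.trace} := by
  refine zariskiClosure_invertibleLocus_subset.antisymm ?_
  rintro ⟨p, q, a⟩ ⟨haq : a * q = p * a, hdet : p.det = q.det, htrace : p.trace = q.trace⟩
  by_cases ha : IsUnit a
  · exact subset_zariskiClosure ⟨haq, ha⟩
  have ha₀ : a.det = 0 := by simpa [isUnit_iff_isUnit_det] using ha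
  obtain ⟨m, hma, hm⟩ := exists_mul_eq_zero_notMem_range_scalar_left p ha₀
  obtain ⟨m', ham', hm'⟩ := exists_mul_eq_zero_notMem_range_scalar_right q ha₀
  refine zariskiClosure_subset_zariskiClosure subset_rfl
    (mem_zariskiClosure_of_eventually_line (y := (m, m', 0)) ?_)
  filter_upwards [(Set.finite_singleton (0 : K)).eventually_cofinite_notMem] with s hs
  obtain ⟨hpdet, hptrace, hp⟩ := hm s hs
  obtain ⟨hqdet, hqtrace, hq⟩ := hm' s hs
  obtain ⟨b, hb, hbq⟩ := exists_isUnit_mul_eq_mul_of_det_eq_of_trace_eq hp hq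
    (by rw [hpdet, hqdet, hdet]) (by rw [hptrace, hqtrace, htrace])
  have still_intertwines : a * (q + s • m') = (p + s • m) * a := by
    rw [mul_add, add_mul, mul_smul_comm, smul_mul_assoc, ham', hma, haq]
  have mem := mem_zariskiClosure_invertibleLocus_of_isUnit_mul_eq_mul still_intertwines hb hbq
  simpa using mem

end InvertibleLocus

end MatrixTriple

open MatrixTriple

theorem stmt7_general (K : Type*) [Field K] [Infinite K] :
    (intertwiners (Fin 2) K = zariskiClosure (rankStratum (Fin 2) K 0) ∪
      zariskiClosure (rankStratum (Fin 2) K 1) ∪ zariskiClosure (rankStratum (Fin 2) K 2)) ∧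
    (∀ r ≤ 2, IsZariskiIrreducible (zariskiClosure (rankStratum (Fin 2) K r))) ∧
    ¬ IsZariskiIrreducible (intertwiners (Fin 2) K) ∧
    zariskiClosure (invertibleLocus (Fin 2) K) =
      {t ∈ intertwiners (Fin 2) K | t.1.det = t.2.1.det ∧ t.1.trace = t.2.1.trace} ∧
    zariskiClosure (invertibleLocus (Fin 2) K) ⊂ intertwiners (Fin 2) K := by
  refine ⟨?_, fun r hr => ?_, not_isZariskiIrreducible_intertwiners,
    zariskiClosure_invertibleLocus_fin_two, zariskiClosure_invertibleLocus_ssubset⟩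
  · rw [intertwiners_eq_iUnion_zariskiClosure, Fintype.card_fin, Set.biUnion_le_succ,
      Set.biUnion_le_succ]
    simp
  · exact (isZariskiIrreducible_rankStratum (by simpa using hr)).zariskiClosure

/-- `X7` is the union of irreducible closed subvarieties indexed by the
rank of `a`; in particular it is reducible. The closure of the locus where `a` is
invertible is strictly contained in `X7`, and is cut out inside `X7` by the extra
equations `det p₁ = det p₂`, `Tr p₁ = Tr p₂`. -/
theorem stmt7 :
    -- union of the closures of the rank strata
    (X7 = zcl {t ∈ X7 | t.2.2.rank = 0} ∪ zcl {t ∈ X7 | t.2.2.rank = 1} ∪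
      zcl {t ∈ X7 | t.2.2.rank = 2}) ∧
    -- each stratum closure is irreducible
    (∀ r : ℕ, r ≤ 2 →
      ∀ f g : MvPolynomial Idx7 ℂ, VanishOn (f * g) (zcl {t ∈ X7 | t.2.2.rank = r}) →
        VanishOn f (zcl {t ∈ X7 | t.2.2.rank = r}) ∨
        VanishOn g (zcl {t ∈ X7 | t.2.2.rank = r})) ∧
    -- X7 itself is reducible
    (¬ ∀ f g : MvPolynomial Idx7 ℂ, VanishOn (f * g) X7 →
        VanishOn f X7 ∨ VanishOn g X7) ∧
    -- the closure of the invertible locus is cut out by the extra equations ...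
    (zcl {t ∈ X7 | IsUnit t.2.2} =
      {t ∈ X7 | t.1.det = t.2.1.det ∧ t.1.trace = t.2.1.trace}) ∧
    -- ... and is strictly contained in X7
    zcl {t ∈ X7 | IsUnit t.2.2} ⊂ X7 :=
  stmt7_general ℂ

end
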